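/- Let d ≥ 2 and k, l ∈ ℝ. For 0 < δ < 1 and a natural number N ≥ 3, define A′_N = [N, N+δ/N] × [0, δ/(d−1)]^{d−1} and C_N = [N+1−δ/(2N), N+1] × [0, δ/(2(d−1))]^{d−1} in ℝ^d, and for t > 0 define J⁻_N(ξ) = |ξ| · ∫₀ᵗ ∫_{ℝ^d} (⟨ξ⟩^l / (⟨ξ₁⟩^k ⟨ξ−ξ₁⟩^k)) · e^{−is(|ξ₁|² − |ξ−ξ₁|² − |ξ|)} · χ_{A′_N}(ξ₁) χ_{C_N}(ξ−ξ₁) dξ₁ ds. Then there exists a constant C > 0, depending only on d, k, l and δ, such that for all N ≥ 3 and all t > 0, one has ‖J⁻_N‖_{L²(ℝ^d)} ≤ C · N^{l−2k−3/2}. -/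

import Mathlib

/-!
The phase `|ξ₁|² - |ξ - ξ₁|² - |ξ|` is non-resonant on the support of the integrand: both `ξ₁` and
`ξ - ξ₁` have modulus `N + O(1)`, more precisely `|ξ₁|² ≤ N² + 4` and `|ξ - ξ₁|² ≥ N²`, while
`|ξ| ≥ 2N`, so the phase is at most `-N/2` (`freq_bounds`). After exchanging the two integrals
(`Jminus_eq`) the time integral is therefore `O(1/N)` uniformly in `t` (`norm_integral_exp_le`).

All three brackets lie between `N` and `4N`, so the weight is `O(N^(l - 2k))` (`weight_le`). The
variable `ξ₁` ranges over a set of volume `O(1/N)`, and the prefactor is `|ξ| = O(N)`; hence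
`J⁻_N` is pointwise `O(N^(l - 2k - 1))` (`norm_Jminus_le`). It is supported in the sum of the two
boxes, of volume `O(1/N)` (`volume_sumBox_le`), whose square root gives the last factor `N^(-1/2)`.
-/

open MeasureTheory

/-- The box `A′_N = [N, N+δ/N] × [0, δ/(d−1)]^{d−1}` in `ℝ^d`. -/
def boxA' (d N : ℕ) (δ : ℝ) : Set (EuclideanSpace ℝ (Fin d)) :=
  {ξ | ∀ j : Fin d,
    if (j : ℕ) = 0 then ξ j ∈ Set.Icc (N : ℝ) ((N : ℝ) + δ / N)
    else ξ j ∈ Set.Icc 0 (δ / ((d : ℝ) - 1))}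

/-- The box `C_N = −B′_N = [N+1−δ/(2N), N+1] × [0, δ/(2(d−1))]^{d−1}` in `ℝ^d`. -/
def boxC (d N : ℕ) (δ : ℝ) : Set (EuclideanSpace ℝ (Fin d)) :=
  {ξ | ∀ j : Fin d,
    if (j : ℕ) = 0 then ξ j ∈ Set.Icc ((N : ℝ) + 1 - δ / (2 * N)) ((N : ℝ) + 1)
    else ξ j ∈ Set.Icc 0 (δ / (2 * ((d : ℝ) - 1)))}

/-- The Japanese bracket `⟨ξ⟩ = √(1+|ξ|²)`. -/
noncomputable def jb {d : ℕ} (ξ : EuclideanSpace ℝ (Fin d)) : ℝ :=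
  Real.sqrt (1 + ‖ξ‖ ^ 2)

/-- `J⁻_N(ξ)`, the resonant part of the second derivative of the wave
component, localized on `A′_N × C_N`. -/
noncomputable def Jminus (d N : ℕ) (k l δ t : ℝ) (ξ : EuclideanSpace ℝ (Fin d)) : ℂ :=
  (‖ξ‖ : ℂ) * ∫ s in (0 : ℝ)..t, ∫ ξ₁,
    ((jb ξ ^ l / (jb ξ₁ ^ k * jb (ξ - ξ₁) ^ k) : ℝ) : ℂ) *
      Complex.exp (-Complex.I * (s : ℂ) *
        ((‖ξ₁‖ ^ 2 - ‖ξ - ξ₁‖ ^ 2 - ‖ξ‖ : ℝ) : ℂ)) *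
      (((boxA' d N δ).indicator (fun _ => (1 : ℝ)) ξ₁ : ℝ) : ℂ) *
      (((boxC d N δ).indicator (fun _ => (1 : ℝ)) (ξ - ξ₁) : ℝ) : ℂ)

/-- A box whose first side is `[p, q]` and whose `n` other sides are `[0, r]`. -/
def slab (n : ℕ) (p q r : ℝ) : Set (EuclideanSpace ℝ (Fin (n + 1))) :=
  {ξ | ∀ j : Fin (n + 1), if (j : ℕ) = 0 then ξ j ∈ Set.Icc p q else ξ j ∈ Set.Icc 0 r}

lemma mem_slab {n : ℕ} {p q r : ℝ} {ξ : EuclideanSpace ℝ (Fin (n + 1))} :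
    ξ ∈ slab n p q r ↔ ξ 0 ∈ Set.Icc p q ∧ ∀ j : Fin n, ξ j.succ ∈ Set.Icc 0 r := by
  simp [slab, Fin.forall_fin_succ]

lemma slab_eq_preimage (n : ℕ) (p q r : ℝ) :
    slab n p q r = (MeasurableEquiv.toLp 2 (Fin (n + 1) → ℝ)).symm ⁻¹'
      (Set.univ.pi fun j => Set.Icc ((Fin.cons p fun _ => 0 : Fin (n + 1) → ℝ) j)
        ((Fin.cons q fun _ => r : Fin (n + 1) → ℝ) j)) := by
  ext ξ
  rw [mem_slab]
  simp only [Set.mem_preimage, Set.mem_univ_pi, Fin.forall_fin_succ, Fin.cons_zero, Fin.cons_succ]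
  rfl

lemma measurableSet_slab (n : ℕ) (p q r : ℝ) : MeasurableSet (slab n p q r) := by
  rw [slab_eq_preimage]
  exact (MeasurableEquiv.measurable _)
    (MeasurableSet.univ_pi fun _ => measurableSet_Icc)

lemma volume_slab (n : ℕ) (p q r : ℝ) :
    volume (slab n p q r) = ENNReal.ofReal (q - p) * ENNReal.ofReal r ^ n := by
  rw [slab_eq_preimage,
    (EuclideanSpace.volume_preserving_symm_measurableEquiv_toLp (Fin (n + 1))).measure_preimage
      (MeasurableSet.univ_pi fun _ => measurableSet_Icc).nullMeasurableSet,
    volume_pi_pi, Fin.prod_univ_succ]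
  simp

lemma norm_sq_bounds {n : ℕ} {p q r : ℝ} (hp : 0 ≤ p) {ξ : EuclideanSpace ℝ (Fin (n + 1))}
    (h : ξ ∈ slab n p q r) : p ^ 2 ≤ ‖ξ‖ ^ 2 ∧ ‖ξ‖ ^ 2 ≤ q ^ 2 + n * r ^ 2 := by
  obtain ⟨⟨h1, h2⟩, h3⟩ := mem_slab.1 h
  rw [EuclideanSpace.real_norm_sq_eq, Fin.sum_univ_succ]
  have h4 : 0 ≤ ∑ j : Fin n, ξ j.succ ^ 2 := Finset.sum_nonneg fun _ _ => sq_nonneg _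
  have h5 : ∑ j : Fin n, ξ j.succ ^ 2 ≤ ∑ _j : Fin n, r ^ 2 :=
    Finset.sum_le_sum fun j _ => pow_le_pow_left₀ (h3 j).1 (h3 j).2 2
  have h6 : p ^ 2 ≤ ξ 0 ^ 2 := pow_le_pow_left₀ hp h1 2
  have h7 : ξ 0 ^ 2 ≤ q ^ 2 := pow_le_pow_left₀ (hp.trans h1) h2 2
  simp at h5
  constructor <;> linarith

/-- The time integral of a nonzero frequency is bounded uniformly in the length of the interval. -/
lemma norm_integral_exp_le (t φ : ℝ) (hφ : φ ≠ 0) :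
    ‖∫ s in (0 : ℝ)..t, Complex.exp (-Complex.I * (s : ℂ) * (φ : ℂ))‖ ≤ 2 / |φ| := by
  have hc : -Complex.I * (φ : ℂ) ≠ 0 := by simp [hφ]
  have e : ∀ s : ℝ, -Complex.I * (s : ℂ) * (φ : ℂ) = -Complex.I * (φ : ℂ) * s := fun s => by ring
  simp_rw [e]
  rw [integral_exp_mul_complex hc, norm_div]
  have hn : ∀ s : ℝ, ‖Complex.exp (-Complex.I * (φ : ℂ) * s)‖ = 1 := fun s => by
    rw [Complex.norm_exp]; simp
  have h1 : ‖-Complex.I * (φ : ℂ)‖ = |φ| := by simp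
  rw [h1]
  gcongr
  refine (norm_sub_le _ _).trans ?_
  rw [hn, hn]; norm_num

lemma rpow_le_of_comparable {x N : ℝ} (m : ℝ) (hN : 0 < N) (h1 : N ≤ x) (h2 : x ≤ 4 * N) :
    x ^ m ≤ 4 ^ |m| * N ^ m := by
  have hx : 0 < x := hN.trans_le h1
  have e : x = (x / N) * N := by field_simp
  rw [e, Real.mul_rpow (by positivity) hN.le]
  gcongr
  have h3 : 1 ≤ x / N := by rwa [le_div_iff₀ hN, one_mul]
  calc (x / N) ^ m ≤ (x / N) ^ |m| := Real.rpow_le_rpow_of_exponent_le h3 (le_abs_self m)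
    _ ≤ 4 ^ |m| := by
      apply Real.rpow_le_rpow (by positivity) _ (abs_nonneg m)
      rwa [div_le_iff₀ hN]

section Boxes

variable {n N : ℕ} {δ : ℝ}

lemma boxA'_eq : boxA' (n + 1) N δ = slab n N (N + δ / N) (δ / n) := by
  simp [boxA', slab]

lemma boxC_eq : boxC (n + 1) N δ =
    slab n ((N : ℝ) + 1 - δ / (2 * N)) ((N : ℝ) + 1) (δ / (2 * n)) := by
  simp [boxC, slab]

lemma slab_mono {p q r p' q' r' : ℝ} (hp : p' ≤ p) (hq : q ≤ q') (hr : r ≤ r') :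
    slab n p q r ⊆ slab n p' q' r' := fun ξ h => by
  rw [mem_slab] at h ⊢
  exact ⟨Set.Icc_subset_Icc hp hq h.1, fun j => Set.Icc_subset_Icc le_rfl hr (h.2 j)⟩

/-- The sum of the two boxes lies in a box with sides `O(1/N)` and `O(1)`. -/
lemma mem_sumBox (hn : 1 ≤ n) (hδ1 : δ < 1)
    {ξ₁ ξ : EuclideanSpace ℝ (Fin (n + 1))}
    (h1 : ξ₁ ∈ boxA' (n + 1) N δ) (h2 : ξ - ξ₁ ∈ boxC (n + 1) N δ) :
    ξ ∈ slab n (2 * N + 1 - δ / (2 * N)) (2 * N + 1 + δ / N) (2 / n) := by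
  rw [boxA'_eq, mem_slab] at h1
  rw [boxC_eq, mem_slab] at h2
  obtain ⟨⟨a1, a2⟩, a3⟩ := h1
  obtain ⟨⟨b1, b2⟩, b3⟩ := h2
  have hn' : (0 : ℝ) < n := by exact_mod_cast hn
  rw [mem_slab]
  simp only [PiLp.sub_apply] at b1 b2 b3
  refine ⟨⟨by linarith, by linarith⟩, fun j => ?_⟩
  obtain ⟨a4, a5⟩ := a3 j
  obtain ⟨b4, b5⟩ := b3 j
  have e1 : δ / n ≤ 1 / n := by gcongr
  have e2 : δ / (2 * n) ≤ 1 / n := by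
    rw [div_le_div_iff₀ (by positivity) hn']; nlinarith
  have e3 : (2 : ℝ) / n = 1 / n + 1 / n := by ring
  exact ⟨by linarith, by linarith⟩

/-- Sizes of the frequencies on the boxes, and the lower bound `N / 2` for the modulus of the
(negative) phase: `|ξ₁|² - |ξ - ξ₁|²` is bounded above, while `|ξ| ≥ 2N`. -/
lemma freq_bounds (hn : 1 ≤ n) (hN : 3 ≤ N) (hδ0 : 0 < δ) (hδ1 : δ < 1)
    {ξ₁ ξ : EuclideanSpace ℝ (Fin (n + 1))}
    (h1 : ξ₁ ∈ boxA' (n + 1) N δ) (h2 : ξ - ξ₁ ∈ boxC (n + 1) N δ) :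
    ((N : ℝ) ≤ jb ξ₁ ∧ jb ξ₁ ≤ 4 * N) ∧ ((N : ℝ) ≤ jb (ξ - ξ₁) ∧ jb (ξ - ξ₁) ≤ 4 * N) ∧
    ((N : ℝ) ≤ jb ξ ∧ jb ξ ≤ 4 * N) ∧ ‖ξ‖ ≤ 4 * N ∧
    ‖ξ₁‖ ^ 2 - ‖ξ - ξ₁‖ ^ 2 - ‖ξ‖ ≤ -((N : ℝ) / 2) := by
  have h3 := mem_sumBox hn hδ1 h1 h2
  rw [boxA'_eq] at h1
  rw [boxC_eq] at h2
  have hN' : (3 : ℝ) ≤ N := by exact_mod_cast hN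
  have hn' : (1 : ℝ) ≤ n := by exact_mod_cast hn
  have hd1 : δ / N ≤ 1 / N := by gcongr
  have hd3 : (1 : ℝ) / N ≤ 1 := by rw [div_le_one (by linarith)]; linarith
  have hd4 : (1 : ℝ) / N * N = 1 := by field_simp
  have hd2 : δ / (2 * N) ≤ 1 := by rw [div_le_one (by linarith)]; linarith
  have hd5 : (0 : ℝ) < 1 / N := by positivity
  have g : ∀ c : ℝ, (n : ℝ) * (c / n) ^ 2 ≤ c ^ 2 := fun c => by
    have : (n : ℝ) * (c / n) ^ 2 = c ^ 2 / n := by field_simp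
    rw [this]
    exact div_le_self (sq_nonneg c) hn'
  have a : ξ₁ ∈ slab n (N : ℝ) (N + 1 / N) (1 / n) :=
    slab_mono le_rfl (by linarith) (by gcongr) h1
  have b : ξ - ξ₁ ∈ slab n (N : ℝ) (N + 1) (1 / n) := by
    refine slab_mono (by linarith) le_rfl ?_ h2
    rw [div_le_div_iff₀ (by positivity) (by positivity)]; nlinarith
  have c : ξ ∈ slab n (2 * N : ℝ) (2 * N + 2) (2 / n) :=
    slab_mono (by linarith) (by linarith) le_rfl h3
  obtain ⟨a1, a2⟩ := norm_sq_bounds (by linarith) a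
  obtain ⟨b1, b2⟩ := norm_sq_bounds (by linarith) b
  obtain ⟨c1, c2⟩ := norm_sq_bounds (by linarith) c
  have ga := g 1
  have gc := g 2
  have c3 : 2 * (N : ℝ) ≤ ‖ξ‖ := le_of_sq_le_sq c1 (norm_nonneg _)
  have jl : ∀ η : EuclideanSpace ℝ (Fin (n + 1)), (N : ℝ) ^ 2 ≤ ‖η‖ ^ 2 → (N : ℝ) ≤ jb η :=
    fun η h => Real.le_sqrt_of_sq_le (by linarith)
  have ju : ∀ η : EuclideanSpace ℝ (Fin (n + 1)), 1 + ‖η‖ ^ 2 ≤ (4 * N : ℝ) ^ 2 →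
      jb η ≤ 4 * N := fun η h => Real.sqrt_le_iff.2 ⟨by linarith, h⟩
  have a3 : ‖ξ₁‖ ^ 2 ≤ (N : ℝ) ^ 2 + 4 := by nlinarith
  have c4 : 1 + ‖ξ‖ ^ 2 ≤ (4 * N : ℝ) ^ 2 := by nlinarith
  refine ⟨⟨jl _ a1, ju _ (by nlinarith)⟩, ⟨jl _ b1, ju _ (by nlinarith)⟩,
    ⟨jl _ (by nlinarith), ju _ c4⟩, le_of_sq_le_sq (by linarith) (by linarith), by linarith⟩

lemma continuous_jb {d : ℕ} : Continuous (jb : EuclideanSpace ℝ (Fin d) → ℝ) := by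
  unfold jb; fun_prop

lemma jb_pos {d : ℕ} (ξ : EuclideanSpace ℝ (Fin d)) : 0 < jb ξ :=
  Real.sqrt_pos.2 (by positivity)

lemma weight_le {k l x y z M : ℝ} (hM : 0 < M) (hx : M ≤ x ∧ x ≤ 4 * M) (hy : M ≤ y ∧ y ≤ 4 * M)
    (hz : M ≤ z ∧ z ≤ 4 * M) :
    z ^ l / (x ^ k * y ^ k) ≤ 4 ^ |l| * 4 ^ |k| * 4 ^ |k| * M ^ (l - 2 * k) := by
  have hx0 := hM.trans_le hx.1
  have hy0 := hM.trans_le hy.1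
  have hz0 := hM.trans_le hz.1
  have e : z ^ l / (x ^ k * y ^ k) = z ^ l * x ^ (-k) * y ^ (-k) := by
    rw [Real.rpow_neg hx0.le, Real.rpow_neg hy0.le]; field_simp
  have e2 : M ^ (l - 2 * k) = M ^ l * M ^ (-k) * M ^ (-k) := by
    rw [← Real.rpow_add hM, ← Real.rpow_add hM]; congr 1; ring
  have i1 := rpow_le_of_comparable l hM hz.1 hz.2
  have i2 := rpow_le_of_comparable (-k) hM hx.1 hx.2
  have i3 := rpow_le_of_comparable (-k) hM hy.1 hy.2
  rw [abs_neg] at i2 i3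
  rw [e, e2]
  calc _ ≤ (4 ^ |l| * M ^ l) * (4 ^ |k| * M ^ (-k)) * (4 ^ |k| * M ^ (-k)) := by gcongr
    _ = _ := by ring

/-- The constant in the bound for the weight `⟨ξ⟩^l / (⟨ξ₁⟩^k ⟨ξ - ξ₁⟩^k)` relative
to `N^(l - 2k)`. -/
noncomputable def wconst (k l : ℝ) : ℝ := 4 ^ |l| * 4 ^ |k| * 4 ^ |k|

lemma wconst_pos (k l : ℝ) : 0 < wconst k l := by unfold wconst; positivity

/-- The part of the integrand of `Jminus` that does not depend on time. -/
noncomputable def amp (d N : ℕ) (k l δ : ℝ) (ξ ξ₁ : EuclideanSpace ℝ (Fin d)) : ℝ :=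
  jb ξ ^ l / (jb ξ₁ ^ k * jb (ξ - ξ₁) ^ k) * (boxA' d N δ).indicator (fun _ => (1 : ℝ)) ξ₁ *
    (boxC d N δ).indicator (fun _ => (1 : ℝ)) (ξ - ξ₁)

lemma amp_eq_zero {d : ℕ} {k l : ℝ} {ξ ξ₁ : EuclideanSpace ℝ (Fin d)}
    (h : ¬ (ξ₁ ∈ boxA' d N δ ∧ ξ - ξ₁ ∈ boxC d N δ)) : amp d N k l δ ξ ξ₁ = 0 := by
  unfold amp
  by_cases h1 : ξ₁ ∈ boxA' d N δ
  · have h2 : ξ - ξ₁ ∉ boxC d N δ := fun h2 => h ⟨h1, h2⟩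
    simp [h2]
  · simp [h1]

lemma abs_amp_le (hn : 1 ≤ n) (hN : 3 ≤ N) (hδ0 : 0 < δ) (hδ1 : δ < 1) (k l : ℝ)
    (ξ ξ₁ : EuclideanSpace ℝ (Fin (n + 1))) :
    |amp (n + 1) N k l δ ξ ξ₁| ≤
      (boxA' (n + 1) N δ).indicator (fun _ => wconst k l * (N : ℝ) ^ (l - 2 * k)) ξ₁ := by
  have hw := wconst_pos k l
  by_cases h : ξ₁ ∈ boxA' (n + 1) N δ ∧ ξ - ξ₁ ∈ boxC (n + 1) N δ
  · obtain ⟨h1, h2⟩ := h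
    obtain ⟨a, b, c, -, -⟩ := freq_bounds hn hN hδ0 hδ1 h1 h2
    have hN' : (0 : ℝ) < N := by exact_mod_cast (by omega : 0 < N)
    have := jb_pos ξ
    have := jb_pos ξ₁
    have := jb_pos (ξ - ξ₁)
    simp only [amp, Set.indicator_of_mem h1, Set.indicator_of_mem h2, mul_one]
    rw [abs_of_nonneg (by positivity)]
    exact weight_le hN' a b c
  · rw [amp_eq_zero h, abs_zero]
    exact Set.indicator_nonneg (fun _ _ => by positivity) _

lemma measurable_amp (k l : ℝ) (ξ : EuclideanSpace ℝ (Fin (n + 1))) :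
    Measurable (amp (n + 1) N k l δ ξ) := by
  unfold amp
  have hA : MeasurableSet (boxA' (n + 1) N δ) := by rw [boxA'_eq]; exact measurableSet_slab ..
  have hC : MeasurableSet (boxC (n + 1) N δ) := by rw [boxC_eq]; exact measurableSet_slab ..
  have h1 : Measurable fun ξ₁ : EuclideanSpace ℝ (Fin (n + 1)) => jb ξ₁ :=
    continuous_jb.measurable
  have h2 : Measurable fun ξ₁ : EuclideanSpace ℝ (Fin (n + 1)) => jb (ξ - ξ₁) :=
    h1.comp (measurable_const.sub measurable_id)
  have h3 : Measurable fun ξ₁ : EuclideanSpace ℝ (Fin (n + 1)) =>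
      (boxC (n + 1) N δ).indicator (fun _ => (1 : ℝ)) (ξ - ξ₁) :=
    (measurable_const.indicator hC).comp (measurable_const.sub measurable_id)
  exact ((((h1.pow_const k).mul (h2.pow_const k)).const_div _).mul
    (measurable_const.indicator hA)).mul h3

lemma volume_boxA'_le (hn : 1 ≤ n) (hN : 3 ≤ N) (hδ1 : δ < 1) :
    volume (boxA' (n + 1) N δ) ≤ ENNReal.ofReal (1 / N) := by
  have hn' : (1 : ℝ) ≤ n := by exact_mod_cast hn
  rw [boxA'_eq, volume_slab]
  calc _ ≤ ENNReal.ofReal (1 / N) * 1 ^ n := by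
        gcongr
        · rw [add_sub_cancel_left]; gcongr
        · rw [ENNReal.ofReal_le_one, div_le_one (by linarith)]; linarith
    _ = _ := by simp

/-- Exchanging the two integrals exhibits the oscillatory time integral. -/
lemma Jminus_eq (hn : 1 ≤ n) (hN : 3 ≤ N) (hδ0 : 0 < δ) (hδ1 : δ < 1) (k l : ℝ) {t : ℝ}
    (ht : 0 < t) (ξ : EuclideanSpace ℝ (Fin (n + 1))) :
    Jminus (n + 1) N k l δ t ξ = (‖ξ‖ : ℂ) * ∫ ξ₁, (amp (n + 1) N k l δ ξ ξ₁ : ℂ) *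
      ∫ s in (0 : ℝ)..t, Complex.exp (-Complex.I * (s : ℂ) *
        ((‖ξ₁‖ ^ 2 - ‖ξ - ξ₁‖ ^ 2 - ‖ξ‖ : ℝ) : ℂ)) := by
  have hA : MeasurableSet (boxA' (n + 1) N δ) := by rw [boxA'_eq]; exact measurableSet_slab ..
  have hAf : volume (boxA' (n + 1) N δ) ≠ ⊤ :=
    ((volume_boxA'_le hn hN hδ1).trans_lt ENNReal.ofReal_lt_top).ne
  have e : Jminus (n + 1) N k l δ t ξ = (‖ξ‖ : ℂ) * ∫ s in (0 : ℝ)..t, ∫ ξ₁,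
      (amp (n + 1) N k l δ ξ ξ₁ : ℂ) * Complex.exp (-Complex.I * (s : ℂ) *
        ((‖ξ₁‖ ^ 2 - ‖ξ - ξ₁‖ ^ 2 - ‖ξ‖ : ℝ) : ℂ)) := by
    unfold Jminus
    congr 2
    ext s
    congr 1
    ext ξ₁
    simp only [amp, Complex.ofReal_mul]
    ring
  rw [e]
  congr 1
  simp_rw [intervalIntegral.integral_of_le ht.le]
  rw [integral_integral_swap]
  · congr 1
    ext ξ₁
    exact integral_const_mul _ _
  · have hb : Integrable (fun p : ℝ × EuclideanSpace ℝ (Fin (n + 1)) =>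
        (boxA' (n + 1) N δ).indicator (fun _ => wconst k l * (N : ℝ) ^ (l - 2 * k)) p.2)
        ((volume.restrict (Set.Ioc 0 t)).prod volume) :=
      Integrable.comp_snd ((integrable_indicator_iff hA).2 (integrableOn_const hAf)) _
    refine hb.mono' ?_ (Filter.Eventually.of_forall fun p => ?_)
    · have h1 := (Complex.measurable_ofReal.comp
        ((measurable_amp (N := N) (δ := δ) k l ξ).comp
          (measurable_snd : Measurable (Prod.snd : ℝ × EuclideanSpace ℝ (Fin (n + 1)) → _))))
      refine (h1.mul ?_).aestronglyMeasurable
      apply Continuous.measurable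
      fun_prop
    · have : ‖Complex.exp (-Complex.I * (p.1 : ℂ) *
          ((‖p.2‖ ^ 2 - ‖ξ - p.2‖ ^ 2 - ‖ξ‖ : ℝ) : ℂ))‖ = 1 := by
        rw [Complex.norm_exp, Real.exp_eq_one_iff]
        simp only [Complex.mul_re, Complex.mul_im, Complex.neg_re, Complex.neg_im, Complex.I_re,
          Complex.I_im, Complex.ofReal_re, Complex.ofReal_im]
        ring
      simp only [Function.uncurry]
      rw [norm_mul, this, mul_one, Complex.norm_real, Real.norm_eq_abs]
      exact abs_amp_le hn hN hδ0 hδ1 k l ξ p.2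

/-- Off the sum of the boxes `Jminus` vanishes; on it, the factors `|ξ| = O(N)`, weight
`O(N^(l - 2k))`, time integral `O(1/N)` and volume `O(1/N)` combine. -/
lemma norm_Jminus_le (hn : 1 ≤ n) (hN : 3 ≤ N) (hδ0 : 0 < δ) (hδ1 : δ < 1) (k l : ℝ) {t : ℝ}
    (ht : 0 < t) (ξ : EuclideanSpace ℝ (Fin (n + 1))) :
    ‖Jminus (n + 1) N k l δ t ξ‖ ≤
      (slab n (2 * N + 1 - δ / (2 * N)) (2 * N + 1 + δ / N) (2 / n)).indicator
        (fun _ => 16 * wconst k l * (N : ℝ) ^ (l - 2 * k - 1)) ξ := by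
  have hw := wconst_pos k l
  have hN' : (0 : ℝ) < N := by exact_mod_cast (by omega : 0 < N)
  rw [Jminus_eq hn hN hδ0 hδ1 k l ht ξ]
  by_cases hex : ∃ ξ₁, ξ₁ ∈ boxA' (n + 1) N δ ∧ ξ - ξ₁ ∈ boxC (n + 1) N δ
  · obtain ⟨η, h1, h2⟩ := hex
    rw [Set.indicator_of_mem (mem_sumBox hn hδ1 h1 h2)]
    obtain ⟨-, -, -, hξ, -⟩ := freq_bounds hn hN hδ0 hδ1 h1 h2
    have hA : MeasurableSet (boxA' (n + 1) N δ) := by rw [boxA'_eq]; exact measurableSet_slab ..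
    have hvol := volume_boxA'_le hn hN hδ1
    have hAf : volume (boxA' (n + 1) N δ) ≠ ⊤ := (hvol.trans_lt ENNReal.ofReal_lt_top).ne
    have hreal : volume.real (boxA' (n + 1) N δ) ≤ 1 / N :=
      ENNReal.toReal_le_of_le_ofReal (by positivity) hvol
    set M : ℝ := wconst k l * (N : ℝ) ^ (l - 2 * k) with hM
    have hM0 : 0 < M := by positivity
    have hint : ‖∫ ξ₁, (amp (n + 1) N k l δ ξ ξ₁ : ℂ) *
        ∫ s in (0 : ℝ)..t, Complex.exp (-Complex.I * (s : ℂ) *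
          ((‖ξ₁‖ ^ 2 - ‖ξ - ξ₁‖ ^ 2 - ‖ξ‖ : ℝ) : ℂ))‖ ≤
        ∫ ξ₁, (boxA' (n + 1) N δ).indicator (fun _ => M * (4 / N)) ξ₁ := by
      refine norm_integral_le_of_norm_le
        ((integrable_indicator_iff hA).2 (integrableOn_const hAf))
        (Filter.Eventually.of_forall fun ξ₁ => ?_)
      by_cases h : ξ₁ ∈ boxA' (n + 1) N δ ∧ ξ - ξ₁ ∈ boxC (n + 1) N δ
      · obtain ⟨-, -, -, -, hφ⟩ := freq_bounds hn hN hδ0 hδ1 h.1 h.2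
        have hamp := abs_amp_le hn hN hδ0 hδ1 k l ξ ξ₁
        rw [Set.indicator_of_mem h.1] at hamp
        rw [Set.indicator_of_mem h.1, norm_mul, Complex.norm_real, Real.norm_eq_abs]
        have hφ' : (N : ℝ) / 2 ≤ |‖ξ₁‖ ^ 2 - ‖ξ - ξ₁‖ ^ 2 - ‖ξ‖| := by
          rw [abs_of_nonpos (by linarith)]; linarith
        gcongr
        refine (norm_integral_exp_le t _ (by linarith)).trans ?_
        calc _ ≤ 2 / ((N : ℝ) / 2) := by gcongr
          _ = 4 / N := by field_simp; norm_num
      · rw [amp_eq_zero h]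
        simp only [Complex.ofReal_zero, zero_mul, norm_zero]
        exact Set.indicator_nonneg (fun _ _ => by positivity) _
    rw [integral_indicator_const _ hA, smul_eq_mul] at hint
    rw [norm_mul, Complex.norm_real, norm_norm]
    calc _ ≤ 4 * N * (1 / N * (M * (4 / N))) := by
          gcongr
          exact hint.trans (by gcongr)
      _ = _ := by
          rw [hM, Real.rpow_sub_one hN'.ne']
          field_simp
          ring
  · have h0 : ∀ ξ₁, amp (n + 1) N k l δ ξ ξ₁ = 0 := fun ξ₁ =>
      amp_eq_zero fun h => hex ⟨ξ₁, h⟩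
    simp only [h0, Complex.ofReal_zero, zero_mul, integral_zero, mul_zero, norm_zero]
    exact Set.indicator_nonneg (fun _ _ => by positivity) _

lemma volume_sumBox_le (hn : 1 ≤ n) (hN : 3 ≤ N) (hδ1 : δ < 1) :
    volume (slab n (2 * N + 1 - δ / (2 * N)) (2 * N + 1 + δ / N) (2 / n)) ≤
      ENNReal.ofReal (2 ^ (n + 1) / N) := by
  have hn' : (1 : ℝ) ≤ n := by exact_mod_cast hn
  have hN' : (0 : ℝ) < N := by exact_mod_cast (by omega : 0 < N)
  rw [volume_slab, ← ENNReal.ofReal_pow (by positivity),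
    ← ENNReal.ofReal_mul' (by positivity)]
  apply ENNReal.ofReal_le_ofReal
  have e : (2 : ℝ) ^ (n + 1) / N = 2 / N * 2 ^ n := by ring
  rw [e]
  gcongr
  · have e1 : (2 * (N : ℝ) + 1 + δ / N - (2 * N + 1 - δ / (2 * N))) = (3 / 2 * δ) / N := by
      field_simp; ring
    rw [e1]
    gcongr
    linarith
  · exact div_le_self (by norm_num) hn'

end Boxes

/-- Upper bound `‖J⁻_N‖_{L²} ≲ N^{l−2k−3/2}`, uniformly in `t > 0`. -/
theorem Jminus_upper_bound
    (d : ℕ) (hd : 2 ≤ d) (k l δ : ℝ) (hδ0 : 0 < δ) (hδ1 : δ < 1) :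
    ∃ C > 0, ∀ N : ℕ, 3 ≤ N → ∀ t : ℝ, 0 < t →
      eLpNorm (Jminus d N k l δ t) 2 volume ≤
        ENNReal.ofReal (C * (N : ℝ) ^ (l - 2 * k - 3 / 2)) := by
  obtain ⟨n, rfl⟩ : ∃ n, d = n + 1 := ⟨d - 1, by omega⟩
  have hn : 1 ≤ n := by omega
  have hw := wconst_pos k l
  refine ⟨16 * wconst k l * (2 ^ (n + 1)) ^ (1 / 2 : ℝ), by positivity, fun N hN t ht => ?_⟩
  have hN' : (0 : ℝ) < N := by exact_mod_cast (by omega : 0 < N)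
  refine (eLpNorm_mono_real (norm_Jminus_le hn hN hδ0 hδ1 k l ht)).trans ?_
  refine (eLpNorm_indicator_const_le _ _).trans ?_
  have e : (l - 2 * k - 3 / 2) = (l - 2 * k - 1) + -(1 / 2) := by ring
  rw [Real.enorm_of_nonneg (by positivity), e, Real.rpow_add hN', Real.rpow_neg hN'.le]
  calc _ ≤ ENNReal.ofReal (16 * wconst k l * (N : ℝ) ^ (l - 2 * k - 1)) *
        ENNReal.ofReal (2 ^ (n + 1) / N) ^ (1 / 2 : ℝ) := by
        gcongr
        simpa using ENNReal.rpow_le_rpow (volume_sumBox_le hn hN hδ1)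
          (by norm_num : (0 : ℝ) ≤ 1 / 2)
    _ = _ := by
        rw [ENNReal.ofReal_rpow_of_nonneg (by positivity) (by norm_num),
          ← ENNReal.ofReal_mul (by positivity), Real.div_rpow (by positivity) hN'.le]
        congr 1
        ring
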